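/- arXiv:2007.14088 — 2 statements merged into one kernel-verified Lean document; each statement's English description precedes it below -/
import Mathlib

section
/- Let F be a finite field of characteristic 2 with q = 2^n elements, and let G = C_16 × C_2. Then the unit group of the group algebra FG is isomorphic to C_16^n × C_8^n × C_4^{2n} × C_2^{20n} × C_{2^n - 1}. -/
/-- The cyclic group of order `m`, realized as `Multiplicative (ZMod m)`. -/
abbrev C (m : ℕ) : Type := Multiplicative (ZMod m)

/-!
Write `V` for the units of augmentation `1`, so that the unit group is `V × Fˣ`. As
`(∑ a_g g) ^ p ^ k = ∑ a_g ^ p ^ k g ^ p ^ k`, the equation `u ^ p ^ k = 1` says that the linear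
map `F[G] → F[G ^ p ^ k]` induced by `g ↦ g ^ p ^ k` sends `u` to `1`; it therefore has
`q ^ (|G| - |G ^ p ^ k|)` solutions, all of which lie in `V`. A finite abelian `p`-group is
determined by these numbers of solutions.
-/

open Finset

/-- The number of solutions of `x ^ d = 1` in `M`, equal to `0` when there are infinitely many. -/
noncomputable def torsionCard (M : Type*) [Monoid M] (d : ℕ) : ℕ :=
  Nat.card {x : M // x ^ d = 1}

section TorsionCard

theorem torsionCard_congr {M N : Type*} [Monoid M] [Monoid N] (e : M ≃* N) (d : ℕ) :
    torsionCard M d = torsionCard N d :=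
  Nat.card_congr <| e.toEquiv.subtypeEquiv fun x ↦ by simp [← map_pow]

theorem torsionCard_prod (M N : Type*) [Monoid M] [Monoid N] (d : ℕ) :
    torsionCard (M × N) d = torsionCard M d * torsionCard N d := by
  rw [torsionCard, torsionCard, torsionCard, ← Nat.card_prod]
  exact Nat.card_congr <| (Equiv.subtypeEquivRight fun x ↦ Prod.ext_iff).trans
    (Equiv.subtypeProdEquivProd (p := fun x : M ↦ x ^ d = 1) (q := fun y : N ↦ y ^ d = 1))

theorem torsionCard_pi {ι : Type*} [Fintype ι] (M : ι → Type*) [∀ i, Monoid (M i)] (d : ℕ) :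
    torsionCard (∀ i, M i) d = ∏ i, torsionCard (M i) d := by
  simp only [torsionCard, ← Nat.card_pi]
  exact Nat.card_congr <| (Equiv.subtypeEquivRight fun x ↦ funext_iff).trans
    (Equiv.subtypePiEquivPi (p := fun i (x : M i) ↦ x ^ d = 1))

theorem torsionCard_eq_card_ker (A : Type*) [CommGroup A] (d : ℕ) :
    torsionCard A d = Nat.card (powMonoidHom d : A →* A).ker :=
  rfl

theorem torsionCard_of_isCyclic (A : Type*) [CommGroup A] [IsCyclic A] [Finite A] (d : ℕ) :
    torsionCard A d = (Nat.card A).gcd d :=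
  IsCyclic.card_powMonoidHom_ker A d

theorem torsionCard_C (m : ℕ) [NeZero m] (d : ℕ) : torsionCard (C m) d = m.gcd d := by
  simp [torsionCard_of_isCyclic]

theorem card_range_powMonoidHom (A : Type*) [CommGroup A] [Finite A] (d : ℕ) :
    Nat.card (powMonoidHom d : A →* A).range = Nat.card A / torsionCard A d := by
  rw [torsionCard_eq_card_ker, ← Subgroup.index_range,
    Nat.div_eq_of_eq_mul_left (Nat.pos_of_ne_zero Subgroup.index_ne_zero_of_finite)
      (Subgroup.card_mul_index _).symm]

end TorsionCard

section Partitions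

variable {ι κ : Type*} [Fintype ι] [Fintype κ]

theorem sum_min_add_one (e : ι → ℕ) (k : ℕ) :
    ∑ i, min (e i) (k + 1) = ∑ i, min (e i) k + #{i | k < e i} := by
  rw [card_filter, ← sum_add_distrib]
  refine sum_congr rfl fun i _ ↦ ?_
  split_ifs <;> omega

theorem card_filter_lt_eq_add (e : ι → ℕ) (k : ℕ) :
    #{i | k < e i} = #{i | e i = k + 1} + #{i | k + 1 < e i} := by
  simp only [card_filter, ← sum_add_distrib]
  refine sum_congr rfl fun i _ ↦ ?_
  split_ifs <;> omega

/-- The numbers `∑ i, min (e i) k` are the partial sums of the partition conjugate to `e`. -/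
theorem exists_equiv_of_sum_min_eq {e : ι → ℕ} {f : κ → ℕ} (he : ∀ i, 0 < e i)
    (hf : ∀ j, 0 < f j) (h : ∀ k, ∑ i, min (e i) k = ∑ j, min (f j) k) :
    ∃ σ : ι ≃ κ, ∀ i, f (σ i) = e i := by
  have card_lt (k) : #{i | k < e i} = #{j | k < f j} := by
    have hk := h (k + 1)
    rw [sum_min_add_one, sum_min_add_one, h k] at hk
    exact Nat.add_left_cancel hk
  have card_eq (k) : #{i | e i = k} = #{j | f j = k} := by
    cases k with
    | zero => simp [(he _).ne', (hf _).ne']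
    | succ k =>
      have hk := card_lt k
      rw [card_filter_lt_eq_add, card_filter_lt_eq_add f, card_lt (k + 1)] at hk
      exact Nat.add_right_cancel hk
  have fiberEquiv (k) : Nonempty ({i // e i = k} ≃ {j // f j = k}) :=
    Fintype.card_eq.1 <| by simpa only [Fintype.card_subtype] using card_eq k
  exact ⟨Equiv.ofFiberEquiv fun k ↦ (fiberEquiv k).some, Equiv.ofFiberEquiv_map _⟩

end Partitions

section AbelianPGroups

variable {p : ℕ} [Fact p.Prime]

theorem torsionCard_pi_C_prime_pow {ι : Type*} [Fintype ι] (e : ι → ℕ) (k : ℕ) :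
    torsionCard (∀ i, C (p ^ e i)) (p ^ k) = p ^ ∑ i, min (e i) k := by
  have gcd_eq (i : ι) : (p ^ e i).gcd (p ^ k) = p ^ min (e i) k := by
    rcases le_total (e i) k with h | h
    · rw [min_eq_left h, Nat.gcd_eq_left (pow_dvd_pow p h)]
    · rw [min_eq_right h, Nat.gcd_eq_right (pow_dvd_pow p h)]
  simp only [torsionCard_pi, torsionCard_C, gcd_eq, prod_pow_eq_pow_sum]

variable {A B : Type*} [CommGroup A] [CommGroup B] [Finite A] [Finite B]

theorem exists_mulEquiv_pi_C_prime_pow (hA : IsPGroup p A) :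
    ∃ (ι : Type) (_ : Fintype ι) (e : ι → ℕ),
      (∀ i, 0 < e i) ∧ Nonempty (A ≃* ∀ i, C (p ^ e i)) := by
  classical
  obtain ⟨ι, _, m, hm, ⟨φ⟩⟩ := CommGroup.equiv_prod_multiplicative_zmod_of_finite A
  have (i : ι) : NeZero (m i) := .of_gt (hm i)
  have isPGroup_factor (i : ι) : IsPGroup p (C (m i)) :=
    (hA.of_equiv φ).of_injective (MonoidHom.mulSingle (fun i ↦ C (m i)) i)
      (Pi.mulSingle_injective (M := fun i ↦ C (m i)) i)
  have exists_pow (i : ι) : ∃ e, m i = p ^ e := by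
    simpa using IsPGroup.iff_card.1 (isPGroup_factor i)
  choose e he using exists_pow
  obtain rfl : m = fun i ↦ p ^ e i := funext he
  exact ⟨ι, ‹_›, e, fun i ↦ Nat.pos_of_ne_zero fun h ↦ by simpa [h] using hm i, ⟨φ⟩⟩

theorem nonempty_mulEquiv_of_torsionCard_eq (hA : IsPGroup p A) (hB : IsPGroup p B)
    (h : ∀ k, torsionCard A (p ^ k) = torsionCard B (p ^ k)) : Nonempty (A ≃* B) := by
  obtain ⟨ι, _, e, he, ⟨φ⟩⟩ := exists_mulEquiv_pi_C_prime_pow hA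
  obtain ⟨κ, _, f, hf, ⟨ψ⟩⟩ := exists_mulEquiv_pi_C_prime_pow hB
  have sum_eq (k) : ∑ i, min (e i) k = ∑ j, min (f j) k := by
    have hk := h k
    rw [torsionCard_congr φ, torsionCard_congr ψ, torsionCard_pi_C_prime_pow,
      torsionCard_pi_C_prime_pow] at hk
    exact Nat.pow_right_injective (Fact.out : p.Prime).two_le hk
  obtain ⟨σ, hσ⟩ := exists_equiv_of_sum_min_eq he hf sum_eq
  obtain rfl : e = fun i ↦ f (σ i) := funext fun i ↦ (hσ i).symm
  let reindex : (∀ j, C (p ^ f j)) ≃* ∀ i, C (p ^ f (σ i)) :=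
    { (σ.piCongrLeft fun j ↦ C (p ^ f j)).symm with map_mul' _ _ := rfl }
  exact ⟨(φ.trans reindex.symm).trans ψ.symm⟩

end AbelianPGroups

section GroupAlgebra

open MonoidAlgebra

theorem natCard_monoidAlgebra (R M : Type*) [Semiring R] [Finite M] :
    Nat.card R[M] = Nat.card R ^ Nat.card M := by
  rw [Nat.card_congr (coeffEquiv.trans Finsupp.equivFunOnFinite), Nat.card_fun]

instance (R M : Type*) [Semiring R] [Finite R] [Finite M] : Finite R[M] :=
  .of_equiv _ (coeffEquiv.trans Finsupp.equivFunOnFinite).symm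

theorem mapDomainRingHom_surjective (R : Type*) [Semiring R] {M N : Type*} [Monoid M] [Monoid N]
    {f : M →* N} (hf : Function.Surjective f) : Function.Surjective (mapDomainRingHom R f) := by
  intro y
  obtain ⟨x, hx⟩ := Finsupp.mapDomain_surjective hf y.coeff
  exact ⟨.ofCoeff x, coeff_injective (by simpa using hx)⟩

theorem card_mapDomainRingHom_eq_one_mul (R : Type*) [Ring R] {M N : Type*}
    [Monoid M] [Monoid N] [Finite M] [Finite N] {f : M →* N} (hf : Function.Surjective f) :
    Nat.card {u : R[M] // mapDomainRingHom R f u = 1} * Nat.card R ^ Nat.card N =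
      Nat.card R ^ Nat.card M := by
  set φ := (mapDomainRingHom R f).toAddMonoidHom
  have toKer : {u : R[M] // mapDomainRingHom R f u = 1} ≃ φ.ker :=
    (Equiv.subRight 1).subtypeEquiv fun u ↦ by
      change mapDomainRingHom R f u = 1 ↔ mapDomainRingHom R f (u - 1) = 0
      rw [map_sub, map_one, sub_eq_zero]
  have range_eq_top : φ.range = ⊤ :=
    AddMonoidHom.range_eq_top.2 (mapDomainRingHom_surjective R hf)
  rw [Nat.card_congr toKer, ← natCard_monoidAlgebra R M, ← natCard_monoidAlgebra R N,
    ← AddSubgroup.card_mul_index φ.ker, AddSubgroup.index_ker, range_eq_top, AddSubgroup.card_top]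

section ExpChar

theorem monoidAlgebra_pow_expChar_pow {R M : Type*} [CommSemiring R] [CommMonoid M] (p : ℕ)
    [ExpChar R p] (k : ℕ) (u : R[M]) :
    u ^ p ^ k =
      mapRingHom M (iterateFrobenius R p k) (mapDomainRingHom R (powMonoidHom (p ^ k)) u) := by
  have : ExpChar R[M] p :=
    expChar_of_injective_ringHom (f := singleOneRingHom) single_right_injective p
  have frobenius_eq : iterateFrobenius R[M] p k =
      (mapRingHom M (iterateFrobenius R p k)).comp
        (mapDomainRingHom R (powMonoidHom (p ^ k))) := by
    apply ringHom_ext <;> intro <;> simp [iterateFrobenius_def, single_pow]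
  exact DFunLike.congr_fun frobenius_eq u

variable {R : Type*} [CommRing R] [IsReduced R] (p : ℕ) [ExpChar R p] (k : ℕ)

theorem monoidAlgebra_pow_expChar_pow_eq_one_iff {M : Type*} [CommMonoid M] (u : R[M]) :
    u ^ p ^ k = 1 ↔ mapDomainRingHom R (powMonoidHom (p ^ k)) u = 1 := by
  rw [monoidAlgebra_pow_expChar_pow]
  exact map_eq_one_iff _ (map_injective _ (iterateFrobenius_inj R p k))

theorem torsionCard_monoidAlgebra [Finite R] {G : Type*} [CommGroup G] [Finite G] :
    torsionCard R[G] (p ^ k) =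
      Nat.card R ^ (Nat.card G - Nat.card G / torsionCard G (p ^ k)) := by
  set f : G →* G := powMonoidHom (p ^ k)
  have eq_one_iff (u : R[G]) : u ^ p ^ k = 1 ↔ mapDomainRingHom R f.rangeRestrict u = 1 := by
    have factor : mapDomainRingHom R f =
        (mapDomainRingHom R f.range.subtype).comp (mapDomainRingHom R f.rangeRestrict) := by
      rw [← mapDomainRingHom_comp, MonoidHom.subtype_comp_rangeRestrict]
    rw [monoidAlgebra_pow_expChar_pow_eq_one_iff, factor]
    exact map_eq_one_iff (mapDomainRingHom R f.range.subtype)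
      (mapDomain_injective f.range.subtype_injective)
  have card_mul := card_mapDomainRingHom_eq_one_mul R f.rangeRestrict_surjective
  simp only [← eq_one_iff] at card_mul
  rw [← card_range_powMonoidHom]
  refine Nat.eq_of_mul_eq_mul_right (pow_pos (Nat.card_pos (α := R)) _) (card_mul.trans ?_)
  rw [← pow_add, Nat.sub_add_cancel (Subgroup.card_le_card_group _)]

end ExpChar

section NormalizedUnits

section Definitions

variable (R M : Type*) [CommSemiring R] [Monoid M]

/-- The augmentation `∑ a_g g ↦ ∑ a_g` of a monoid algebra. -/
noncomputable def augmentation : R[M] →ₐ[R] R :=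
  lift R R M 1

/-- The group of normalized units `V(R[M])`, that is, the units of augmentation `1`. -/
noncomputable def normalizedUnits : Subgroup R[M]ˣ :=
  (Units.map (augmentation R M : R[M] →* R)).ker

variable {R M}

theorem mem_normalizedUnits {u : R[M]ˣ} :
    u ∈ normalizedUnits R M ↔ augmentation R M u = 1 :=
  Units.ext_iff

theorem algebraMap_comp_augmentation :
    (algebraMap R R[M]).comp (augmentation R M) = mapDomainRingHom R (1 : M →* M) := by
  apply ringHom_ext <;> intro <;> simp [augmentation]

end Definitions

section ExpChar

variable {R : Type*} [CommRing R] [IsReduced R] (p : ℕ) [ExpChar R p]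

theorem augmentation_eq_one_of_pow_eq_one {M : Type*} [Monoid M] {k : ℕ} {u : R[M]}
    (hu : u ^ p ^ k = 1) : augmentation R M u = 1 := by
  have pow_eq_one : augmentation R M u ^ (p ^ k * 1) = 1 := by
    rw [mul_one, ← map_pow, hu, map_one]
  simpa only [ExpChar.pow_prime_pow_mul_eq_one_iff, pow_one] using pow_eq_one

theorem torsionCard_normalizedUnits (M : Type*) [Monoid M] (k : ℕ) :
    torsionCard (normalizedUnits R M) (p ^ k) = torsionCard R[M] (p ^ k) := by
  have hp : p ^ k ≠ 0 := pow_ne_zero k (expChar_ne_zero R p)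
  refine Nat.card_congr ⟨fun v ↦ ⟨v.1.1, ?_⟩,
    fun u ↦ ⟨⟨Units.ofPowEqOne u (p ^ k) u.2 hp, ?_⟩, ?_⟩, fun v ↦ ?_, fun u ↦ rfl⟩
  · simpa [Subtype.ext_iff, Units.ext_iff] using v.2
  · exact mem_normalizedUnits.2 (augmentation_eq_one_of_pow_eq_one p u.2)
  · exact Subtype.ext (Units.ext u.2)
  · exact Subtype.ext (Subtype.ext (Units.ext rfl))

variable {p}

theorem isPGroup_normalizedUnits {G : Type*} [CommGroup G] [Finite G] (hG : IsPGroup p G) :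
    IsPGroup p (normalizedUnits R G) := by
  obtain ⟨k, hk⟩ := isPGroup_iff_exists_pow_pow_eq_one.1 hG
  have pow_eq_one : (powMonoidHom (p ^ k) : G →* G) = 1 := MonoidHom.ext hk
  refine isPGroup_iff_pow_pow_eq_one.2 fun v ↦ ⟨k, Subtype.ext <| Units.ext ?_⟩
  have aug_v : augmentation R G v.1 = 1 := mem_normalizedUnits.1 v.2
  have pow_v : (v.1 : R[G]) ^ p ^ k = 1 := by
    rw [monoidAlgebra_pow_expChar_pow_eq_one_iff, pow_eq_one, ← algebraMap_comp_augmentation]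
    simp [aug_v, one_def]
  simpa using pow_v

end ExpChar

/-- The splitting of an abelian group induced by a homomorphism `f` with a section `s`. -/
def mulEquivKerProd {A B : Type*} [CommGroup A] [Group B] (f : A →* B) (s : B →* A)
    (h : Function.LeftInverse f s) : A ≃* f.ker × B where
  toFun a := (⟨a / s (f a), by simp [MonoidHom.mem_ker, h (f a)]⟩, f a)
  invFun x := x.1 * s x.2
  left_inv a := by simp
  right_inv x := by
    have hx : f x.1 = 1 := x.1.2
    ext <;> simp [h x.2, hx]
  map_mul' a b := by
    ext <;> simp [mul_div_mul_comm]

/-- The decomposition of a unit into its normalized part and its augmentation. -/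
noncomputable def unitsMulEquiv (R M : Type*) [CommSemiring R] [CommMonoid M] :
    R[M]ˣ ≃* normalizedUnits R M × Rˣ :=
  mulEquivKerProd (Units.map (augmentation R M : R[M] →* R))
    (Units.map (algebraMap R R[M] : R →* R[M])) fun a ↦ Units.ext (by simp [augmentation])

theorem nonempty_units_monoidAlgebra_mulEquiv {p : ℕ} [Fact p.Prime]
    {R G P : Type*} [CommRing R] [IsReduced R] [Finite R] [ExpChar R p]
    [CommGroup G] [Finite G] (hG : IsPGroup p G) [CommGroup P] [Finite P] (hP : IsPGroup p P)
    (h : ∀ k, torsionCard P (p ^ k) =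
      Nat.card R ^ (Nat.card G - Nat.card G / torsionCard G (p ^ k))) :
    Nonempty (R[G]ˣ ≃* P × Rˣ) := by
  have torsionCard_eq (k) :
      torsionCard (normalizedUnits R G) (p ^ k) = torsionCard P (p ^ k) := by
    rw [torsionCard_normalizedUnits, torsionCard_monoidAlgebra, h]
  obtain ⟨e⟩ := nonempty_mulEquiv_of_torsionCard_eq (isPGroup_normalizedUnits hG) hP torsionCard_eq
  exact ⟨(unitsMulEquiv R G).trans (e.prodCongr (.refl _))⟩

end NormalizedUnits

end GroupAlgebra

theorem torsionCard_fun_C (r m : ℕ) [NeZero m] (d : ℕ) :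
    torsionCard (Fin r → C m) d = m.gcd d ^ r := by
  simp [torsionCard_pi, torsionCard_C]

theorem prod_gcd_two_pow_eq (k : ℕ) :
    Nat.gcd 16 (2 ^ k) * Nat.gcd 8 (2 ^ k) * Nat.gcd 4 (2 ^ k) ^ 2 * Nat.gcd 2 (2 ^ k) ^ 20 =
      2 ^ (32 - 32 / (Nat.gcd 16 (2 ^ k) * Nat.gcd 2 (2 ^ k))) := by
  obtain hk | hk := lt_or_ge k 4
  · interval_cases k <;> norm_num
  · have gcd_eq {m : ℕ} (hm : m ∣ 2 ^ 4) : Nat.gcd m (2 ^ k) = m :=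
      Nat.gcd_eq_left (hm.trans (pow_dvd_pow 2 hk))
    norm_num [@gcd_eq 16, @gcd_eq 8, @gcd_eq 4, @gcd_eq 2]

theorem nonempty_units_mulEquiv_C (F : Type*) [Field F] [Finite F] :
    Nonempty (Fˣ ≃* C (Nat.card F - 1)) :=
  ⟨mulEquivOfCyclicCardEq (by rw [Nat.card_units]; exact (Nat.card_zmod _).symm)⟩

theorem unit_group_stmt_2 (F : Type*) [Field F] [Fintype F] [CharP F 2]
    (n : ℕ) (hn : 0 < n) (hF : Fintype.card F = 2 ^ n) :
    Nonempty ((MonoidAlgebra F (C 16 × C 2))ˣ ≃*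
      ((Fin (n) → C 16) × (Fin (n) → C 8) × (Fin (2 * n) → C 4) × (Fin (20 * n) → C 2) × C (2 ^ n - 1))) := by
  have cardF : Nat.card F = 2 ^ n := by rw [Nat.card_eq_fintype_card, hF]
  have cardG : Nat.card (C 16 × C 2) = 32 := by simp
  let P := (Fin n → C 16) × (Fin n → C 8) × (Fin (2 * n) → C 4) × (Fin (20 * n) → C 2)
  have isPGroup_G : IsPGroup 2 (C 16 × C 2) := .of_card (n := 5) cardG
  have isPGroup_P : IsPGroup 2 P := by
    refine .of_card (n := 31 * n) ?_
    rw [show 31 * n = 4 * n + (3 * n + (2 * (2 * n) + 20 * n)) by ring]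
    simp [P, pow_add, pow_mul]
  have torsionCard_P (k : ℕ) : torsionCard P (2 ^ k) =
      Nat.card F ^ (Nat.card (C 16 × C 2) -
        Nat.card (C 16 × C 2) / torsionCard (C 16 × C 2) (2 ^ k)) := by
    simp only [P, cardF, cardG, torsionCard_prod, torsionCard_fun_C, torsionCard_C]
    rw [pow_right_comm, ← prod_gcd_two_pow_eq]
    ring
  obtain ⟨e⟩ := nonempty_units_monoidAlgebra_mulEquiv isPGroup_G isPGroup_P torsionCard_P
  obtain ⟨c⟩ := nonempty_units_mulEquiv_C F
  rw [cardF] at c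
  exact ⟨e.trans <| ((MulEquiv.refl P).prodCongr c).trans <| MulEquiv.prodAssoc.trans <|
    .prodCongr (.refl _) <| MulEquiv.prodAssoc.trans <| .prodCongr (.refl _) MulEquiv.prodAssoc⟩
end

section
/- Let F be a finite field of characteristic p > 2 with q = p^n elements, and let G = C_4 × C_4 × C_2. Then the unit group U(FG) is isomorphic to: C_{p^n-1}^{32} if q ≡ 1 (mod 4); C_{p^n-1}^8 × C_{p^{2n}-1}^{12} if q ≡ -1 (mod 4). -/
/-!
If `g ^ (q ^ ℓ) = g` for every `g` in the finite abelian group `G`, then the `ℓ`-th power of the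
`q`-power Frobenius of `FG` fixes `F` and `G`, so `x ^ (q ^ ℓ) = x` for all `x` in `FG`. Hence `FG`
is reduced, that is, a product of finite fields, and if `ℓ` is prime each of these has degree `1`
or `ℓ` over `F`. The factors of degree `1` correspond to the algebra homomorphisms `FG → F`, that
is, to the homomorphisms `G → Fˣ`; the number of the other factors then follows by comparing
dimensions. For `C₄ × C₄ × C₂` and odd `q` one can take `ℓ = 2`.
-/

open Module

theorem natCard_C (m : ℕ) : Nat.card (C m) = m :=
  Nat.card_zmod m

section HomCount

theorem natCard_monoidHom_prod (G H M : Type*) [MulOneClass G] [MulOneClass H] [CommMonoid M] :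
    Nat.card (G × H →* M) = Nat.card (G →* M) * Nat.card (H →* M) := by
  rw [← Nat.card_prod]
  exact Nat.card_congr
    { toFun := fun f => (f.comp (.inl G H), f.comp (.inr G H))
      invFun := fun f => f.1.coprod f.2
      left_inv := MonoidHom.coprod_unique
      right_inv := fun f =>
        Prod.ext (MonoidHom.coprod_comp_inl f.1 f.2) (MonoidHom.coprod_comp_inr f.1 f.2) }

theorem natCard_monoidHom_of_isCyclic (G M : Type*) [CommGroup G] [IsCyclic G] [CommGroup M]
    [IsCyclic M] [Finite M] : Nat.card (G →* M) = (Nat.card M).gcd (Nat.card G) := by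
  obtain ⟨e⟩ := IsCyclic.monoidHom_mulEquiv_rootsOfUnity G M
  have : IsCyclic Mˣ := isCyclic_of_surjective toUnits toUnits.surjective
  calc Nat.card (G →* M)
    _ = Nat.card (powMonoidHom (Nat.card G) : Mˣ →* Mˣ).ker := Nat.card_congr e.toEquiv
    _ = (Nat.card M).gcd (Nat.card G) := by
      rw [IsCyclic.card_powMonoidHom_ker, Nat.card_congr (toUnits (G := M)).toEquiv]

end HomCount

theorem nonempty_pi_mulEquiv_C_prod_C {ι : Type*} [Finite ι] (K : ι → Type*) [∀ i, Group (K i)]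
    [∀ i, IsCyclic (K i)] (P : ι → Prop) {a b : ℕ} (ha : ∀ i, P i → Nat.card (K i) = a)
    (hb : ∀ i, ¬ P i → Nat.card (K i) = b) :
    Nonempty ((∀ i, K i) ≃*
      (Fin (Nat.card {i // P i}) → C a) × (Fin (Nat.card {i // ¬ P i}) → C b)) := by
  classical
  let split : (∀ i, K i) ≃* (∀ i : {i // P i}, K i) × (∀ i : {i // ¬ P i}, K i) :=
    { Equiv.piEquivPiSubtypeProd P K with map_mul' := fun _ _ => rfl }
  let eP (i : {i // P i}) : K i ≃* C a :=
    mulEquivOfCyclicCardEq ((ha i i.2).trans (natCard_C a).symm)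
  let eN (i : {i // ¬ P i}) : K i ≃* C b :=
    mulEquivOfCyclicCardEq ((hb i i.2).trans (natCard_C b).symm)
  exact ⟨split.trans (.prodCongr
    ((MulEquiv.piCongrRight eP).trans (.arrowCongr (Finite.equivFin _) (.refl _)))
    ((MulEquiv.piCongrRight eN).trans (.arrowCongr (Finite.equivFin _) (.refl _))))⟩

section ResidueFields

theorem ker_algHom_injective (R A : Type*) [CommRing R] [Ring A] [Algebra R A] :
    Function.Injective fun φ : A →ₐ[R] R => RingHom.ker φ := by
  intro φ ψ h
  ext x
  have hx : x - algebraMap R A (φ x) ∈ RingHom.ker ψ :=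
    h.le (by simp [RingHom.mem_ker])
  simpa [RingHom.mem_ker, sub_eq_zero, eq_comm (a := φ x)] using hx

variable (F A : Type*) [Field F] [CommRing A] [Algebra F A]

theorem exists_algHom_ker_eq {I : Ideal A} (hI : finrank F (A ⧸ I) = 1) :
    ∃ φ : A →ₐ[F] F, RingHom.ker φ = I := by
  have : Nontrivial (A ⧸ I) := nontrivial_of_finrank_eq_succ hI
  have hbij : Function.Bijective (Algebra.ofId F (A ⧸ I)) := by
    refine ⟨(algebraMap F (A ⧸ I)).injective, fun y => ?_⟩
    obtain ⟨c, hc⟩ := (finrank_eq_one_iff_of_nonzero' 1 one_ne_zero).1 hI y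
    exact ⟨c, (Algebra.algebraMap_eq_smul_one c).trans hc⟩
  refine ⟨(AlgEquiv.ofBijective _ hbij).symm.toAlgHom.comp (Ideal.Quotient.mkₐ F I), ?_⟩
  ext x
  simp [RingHom.mem_ker, Ideal.Quotient.eq_zero_iff_mem]

theorem natCard_maximalSpectrum_finrank_eq_one :
    Nat.card {m : MaximalSpectrum A // finrank F (A ⧸ m.asIdeal) = 1} = Nat.card (A →ₐ[F] F) := by
  have hsurj (φ : A →ₐ[F] F) : Function.Surjective φ := fun c => ⟨algebraMap F A c, φ.commutes c⟩
  have hrank (φ : A →ₐ[F] F) : finrank F (A ⧸ RingHom.ker φ) = 1 :=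
    (Ideal.quotientKerAlgEquivOfSurjective (hsurj φ)).toLinearEquiv.finrank_eq.trans
      (finrank_self F)
  let ker (φ : A →ₐ[F] F) : {m : MaximalSpectrum A // finrank F (A ⧸ m.asIdeal) = 1} :=
    ⟨⟨RingHom.ker φ, RingHom.ker_isMaximal_of_surjective φ (hsurj φ)⟩, hrank φ⟩
  refine (Nat.card_eq_of_bijective ker ⟨fun φ ψ h => ?_, fun m => ?_⟩).symm
  · exact ker_algHom_injective F A (congrArg (fun m => m.1.asIdeal) h)
  · obtain ⟨φ, hφ⟩ := exists_algHom_ker_eq F A m.2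
    exact ⟨φ, Subtype.ext (MaximalSpectrum.ext hφ)⟩

variable [Module.Finite F A] [IsReduced A]

theorem finrank_eq_sum_finrank_quotient [Fintype (MaximalSpectrum A)] :
    finrank F A = ∑ m : MaximalSpectrum A, finrank F (A ⧸ m.asIdeal) := by
  have := IsArtinianRing.of_finite F A
  rw [((IsArtinianRing.equivPi A).restrictScalars F).toLinearEquiv.finrank_eq,
    finrank_pi_fintype]

theorem finrank_eq_natCard_algHom_add_mul {d : ℕ}
    (hd : ∀ m : MaximalSpectrum A, finrank F (A ⧸ m.asIdeal) ≠ 1 → finrank F (A ⧸ m.asIdeal) = d) :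
    finrank F A = Nat.card (A →ₐ[F] F) +
      Nat.card {m : MaximalSpectrum A // finrank F (A ⧸ m.asIdeal) ≠ 1} * d := by
  classical
  have := IsArtinianRing.of_finite F A
  have := Fintype.ofFinite (MaximalSpectrum A)
  let P (m : MaximalSpectrum A) : Prop := finrank F (A ⧸ m.asIdeal) = 1
  calc finrank F A
    _ = ∑ m : {m // P m}, finrank F (A ⧸ m.1.asIdeal) +
        ∑ m : {m // ¬ P m}, finrank F (A ⧸ m.1.asIdeal) := by
      rw [finrank_eq_sum_finrank_quotient F A]
      exact (Fintype.sum_subtype_add_sum_subtype P _).symm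
    _ = ∑ _m : {m // P m}, 1 + ∑ _m : {m // ¬ P m}, d := by
      congr 1
      · exact Finset.sum_congr rfl fun m _ => m.2
      · exact Finset.sum_congr rfl fun m _ => hd m m.2
    _ = Nat.card (A →ₐ[F] F) + Nat.card {m // ¬ P m} * d := by
      rw [← natCard_maximalSpectrum_finrank_eq_one F A]
      simp [P, Nat.card_eq_fintype_card]

end ResidueFields

section Frobenius

variable (F : Type*) [Field F] [Fintype F] {ℓ : ℕ}

theorem isReduced_of_forall_pow_eq_self {A : Type*} [MonoidWithZero A] {k : ℕ} (hk : 1 < k)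
    (h : ∀ x : A, x ^ k = x) : IsReduced A :=
  (isReduced_iff_pow_one_lt k hk).2 fun x hx => (h x).symm.trans hx

theorem frobeniusAlgHom_pow_apply {A : Type*} [CommRing A] [Algebra F A] (k : ℕ) (x : A) :
    (FiniteField.frobeniusAlgHom F A ^ k) x = x ^ Fintype.card F ^ k := by
  rw [AlgHom.coe_pow, FiniteField.coe_frobeniusAlgHom, pow_iterate]

theorem finrank_dvd_of_forall_pow_card_pow_eq_self (K : Type*) [Field K] [Algebra F K]
    [Module.Finite F K] (h : ∀ x : K, x ^ Fintype.card F ^ ℓ = x) : finrank F K ∣ ℓ := by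
  have := Module.finite_of_finite F (M := K)
  rw [← FiniteField.orderOf_frobeniusAlgHom F K]
  refine orderOf_dvd_of_pow_eq_one (AlgHom.ext fun x => ?_)
  rw [frobeniusAlgHom_pow_apply, h, AlgHom.one_apply]

theorem monoidAlgebra_pow_card_pow_eq_self {G : Type*} [CommMonoid G]
    (h : ∀ g : G, g ^ Fintype.card F ^ ℓ = g) (x : MonoidAlgebra F G) :
    x ^ Fintype.card F ^ ℓ = x := by
  have hφ : FiniteField.frobeniusAlgHom F (MonoidAlgebra F G) ^ ℓ = 1 := by
    refine MonoidAlgebra.algHom_ext (fun g => ?_) (Subsingleton.elim _ _)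
    rw [frobeniusAlgHom_pow_apply, MonoidAlgebra.single_pow, h, one_pow, AlgHom.one_apply]
  rw [← frobeniusAlgHom_pow_apply, hφ, AlgHom.one_apply]

end Frobenius

section UnitGroup

variable {F : Type*} [Field F] [Fintype F]

theorem natCard_units_eq_of_finrank_eq (K : Type*) [DivisionRing K] [Algebra F K]
    [Module.Finite F K] {d : ℕ} (hd : finrank F K = d) : Nat.card Kˣ = Fintype.card F ^ d - 1 := by
  have := Module.finite_of_finite F (M := K)
  rw [Nat.card_units, Module.natCard_eq_pow_finrank (K := F), hd, Nat.card_eq_fintype_card]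

theorem nonempty_units_mulEquiv_of_forall_pow_eq_self (A : Type*) [CommRing A] [Algebra F A]
    [Module.Finite F A] {ℓ s : ℕ} (hℓ : ℓ.Prime) (h : ∀ x : A, x ^ Fintype.card F ^ ℓ = x)
    (hs : Nat.card (A →ₐ[F] F) + s * ℓ = finrank F A) :
    Nonempty (Aˣ ≃* (Fin (Nat.card (A →ₐ[F] F)) → C (Fintype.card F - 1)) ×
      (Fin s → C (Fintype.card F ^ ℓ - 1))) := by
  have := isReduced_of_forall_pow_eq_self (Nat.one_lt_pow hℓ.ne_zero Fintype.one_lt_card) h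
  have := IsArtinianRing.of_finite F A
  let _ (m : MaximalSpectrum A) : Field (A ⧸ m.asIdeal) := Ideal.Quotient.field m.asIdeal
  have (m : MaximalSpectrum A) : Finite (A ⧸ m.asIdeal) := Module.finite_of_finite F
  have hdeg (m : MaximalSpectrum A) (hm : finrank F (A ⧸ m.asIdeal) ≠ 1) :
      finrank F (A ⧸ m.asIdeal) = ℓ := by
    refine (hℓ.eq_one_or_self_of_dvd _ ?_).resolve_left hm
    refine finrank_dvd_of_forall_pow_card_pow_eq_self F _ fun x => ?_
    obtain ⟨a, rfl⟩ := Ideal.Quotient.mk_surjective x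
    rw [← map_pow, h]
  have hs' : Nat.card {m : MaximalSpectrum A // finrank F (A ⧸ m.asIdeal) ≠ 1} = s := by
    have := finrank_eq_natCard_algHom_add_mul F A hdeg
    exact Nat.eq_of_mul_eq_mul_right hℓ.pos (by omega)
  obtain ⟨e⟩ := nonempty_pi_mulEquiv_C_prod_C (fun m : MaximalSpectrum A => (A ⧸ m.asIdeal)ˣ)
    (fun m => finrank F (A ⧸ m.asIdeal) = 1)
    (fun m hm => natCard_units_eq_of_finrank_eq (F := F) (A ⧸ m.asIdeal) hm)
    (fun m hm => natCard_units_eq_of_finrank_eq (F := F) (A ⧸ m.asIdeal) (hdeg m hm))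
  rw [pow_one, natCard_maximalSpectrum_finrank_eq_one, hs'] at e
  exact ⟨((Units.mapEquiv (IsArtinianRing.equivPi A).toMulEquiv).trans .piUnits).trans e⟩

theorem natCard_monoidAlgebra_algHom (R G : Type*) [CommSemiring R] [Group G] :
    Nat.card (MonoidAlgebra R G →ₐ[R] R) = Nat.card (G →* Rˣ) :=
  Nat.card_congr ((MonoidAlgebra.lift R R G).symm.trans MonoidHom.toHomUnitsMulEquiv.toEquiv)

theorem nonempty_units_monoidAlgebra_mulEquiv_s9 (G : Type*) [CommGroup G] [Finite G] {ℓ r s : ℕ}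
    (hℓ : ℓ.Prime) (hG : ∀ g : G, g ^ Fintype.card F ^ ℓ = g) (hr : Nat.card (G →* Fˣ) = r)
    (hs : r + s * ℓ = Nat.card G) :
    Nonempty ((MonoidAlgebra F G)ˣ ≃* (Fin r → C (Fintype.card F - 1)) ×
      (Fin s → C (Fintype.card F ^ ℓ - 1))) := by
  have hr' := (natCard_monoidAlgebra_algHom F G).trans hr
  have hfin : finrank F (MonoidAlgebra F G) = Nat.card G :=
    finrank_eq_nat_card_basis (MonoidAlgebra.basis G F)
  have := nonempty_units_mulEquiv_of_forall_pow_eq_self (F := F) (MonoidAlgebra F G) (s := s) hℓ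
    (monoidAlgebra_pow_card_pow_eq_self F hG) (by rw [hr', hs, hfin])
  rwa [hr'] at this

end UnitGroup

section CFourFourTwo

theorem pow_sq_eq_self_of_pow_four_eq_one {M : Type*} [Monoid M] {g : M} (hg : g ^ 4 = 1) {q : ℕ}
    (hq : Odd q) : g ^ q ^ 2 = g := by
  rw [pow_eq_pow_mod _ hg, Nat.pow_mod]
  obtain h | h : q % 4 = 1 ∨ q % 4 = 3 := Nat.odd_mod_four_iff.1 (Nat.odd_iff.1 hq)
  all_goals simp [h]

theorem pow_four_eq_one_C_four_four_two (g : C 4 × C 4 × C 2) : g ^ 4 = 1 := by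
  decide +revert

theorem natCard_monoidHom_C_four_four_two (M : Type*) [CommGroup M] [IsCyclic M] [Finite M] :
    Nat.card (C 4 × C 4 × C 2 →* M) =
      (Nat.card M).gcd 4 * ((Nat.card M).gcd 4 * (Nat.card M).gcd 2) := by
  simp only [natCard_monoidHom_prod, natCard_monoidHom_of_isCyclic, natCard_C]

theorem nonempty_units_monoidAlgebra_C_four_four_two_mulEquiv (F : Type*) [Field F] [Fintype F]
    {q r s : ℕ} (hF : Fintype.card F = q) (hq : Odd q)
    (hr : (q - 1).gcd 4 * ((q - 1).gcd 4 * (q - 1).gcd 2) = r) (hs : r + s * 2 = 32) :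
    Nonempty ((MonoidAlgebra F (C 4 × C 4 × C 2))ˣ ≃*
      (Fin r → C (q - 1)) × (Fin s → C (q ^ 2 - 1))) := by
  subst hF
  refine nonempty_units_monoidAlgebra_mulEquiv_s9 _ Nat.prime_two
    (fun g => pow_sq_eq_self_of_pow_four_eq_one (pow_four_eq_one_C_four_four_two g) hq) ?_ ?_
  · rw [natCard_monoidHom_C_four_four_two, Nat.card_units, Nat.card_eq_fintype_card, hr]
  · simpa only [Nat.card_prod, natCard_C] using hs

end CFourFourTwo

theorem unit_group_stmt_9 (F : Type*) [Field F] [Fintype F] (p n : ℕ)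
    (hp : p.Prime) (hp2 : 2 < p) [CharP F p] (hn : 0 < n)
    (hF : Fintype.card F = p ^ n) :
    (((p ^ n : ZMod 4) = 1) →
      Nonempty ((MonoidAlgebra F (C 4 × C 4 × C 2))ˣ ≃* ((Fin (32) → C (p ^ n - 1))))) ∧
    (((p ^ n : ZMod 4) = -1) →
      Nonempty ((MonoidAlgebra F (C 4 × C 4 × C 2))ˣ ≃* ((Fin (8) → C (p ^ n - 1)) × (Fin (12) → C (p ^ (2 * n) - 1))))) := by
  constructor <;> intro h
  · have hq : p ^ n % 4 = 1 :=
      (ZMod.natCast_eq_natCast_iff' (p ^ n) 1 4).1 (by push_cast; exact h)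
    have h4 : (p ^ n - 1).gcd 4 = 4 := Nat.gcd_eq_right (by omega)
    have h2 : (p ^ n - 1).gcd 2 = 2 := Nat.gcd_eq_right (by omega)
    obtain ⟨e⟩ := nonempty_units_monoidAlgebra_C_four_four_two_mulEquiv F (r := 32) (s := 0) hF
      (Nat.odd_iff.2 (by omega)) (by rw [h4, h2]) rfl
    exact ⟨e.trans .prodUnique⟩
  · have hq : p ^ n % 4 = 3 :=
      (ZMod.natCast_eq_natCast_iff' (p ^ n) 3 4).1 (by push_cast; exact h.trans rfl)
    have h4 : (p ^ n - 1).gcd 4 = 2 := by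
      rw [Nat.gcd_comm, Nat.gcd_rec, show (p ^ n - 1) % 4 = 2 by omega]
      rfl
    have h2 : (p ^ n - 1).gcd 2 = 2 := Nat.gcd_eq_right (by omega)
    rw [mul_comm 2 n, pow_mul]
    exact nonempty_units_monoidAlgebra_C_four_four_two_mulEquiv F hF
      (Nat.odd_iff.2 (by omega)) (by rw [h4, h2]) rfl
end
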